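/- Let q > 2 be a prime power, r ≥ 3, and let B be the hypersurface of PG(r,q²) defined below (with the stated conditions on α and β). Then for every line ℓ of PG(r,q²), the cardinality |ℓ ∩ B| belongs to the set {0, 1, 2, q−1, q, q+1, q+2, 2q−1, 2q, q²+1}. -/

import Mathlib

/-- The affine equation
`x_r^q − x_r + α^q(x₁^{2q}+⋯+x_{r−1}^{2q}) − α(x₁²+⋯+x_{r−1}²)
  = (β^q−β)(x₁^{q+1}+⋯+x_{r−1}^{q+1})`. -/
def affEq {F : Type*} [Field F] (q r : ℕ) (α β : F) (x : Fin (r + 1) → F) : Prop :=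
  x (Fin.last r) ^ q - x (Fin.last r)
      + α ^ q * (∑ i : Fin (r + 1), if 1 ≤ i.1 ∧ i.1 < r then x i ^ (2 * q) else 0)
      - α * (∑ i : Fin (r + 1), if 1 ≤ i.1 ∧ i.1 < r then x i ^ 2 else 0)
    = (β ^ q - β) * (∑ i : Fin (r + 1), if 1 ≤ i.1 ∧ i.1 < r then x i ^ (q + 1) else 0)

/-- The hypersurface `B` of `PG(r,q²)`: the affine points (X₀ ≠ 0) whose affine
coordinates satisfy `affEq`, together with the points at infinity (X₀ = 0)
satisfying `X₁² + ⋯ + X_{r−1}² = 0`. -/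
noncomputable def Bset (F : Type*) [Field F] (q r : ℕ) (α β : F) :
    Set (Projectivization F (Fin (r + 1) → F)) :=
  {P | (P.rep 0 ≠ 0 ∧ affEq q r α β fun i => P.rep i / P.rep 0) ∨
       (P.rep 0 = 0 ∧ (∑ i : Fin (r + 1), if 1 ≤ i.1 ∧ i.1 < r then P.rep i ^ 2 else 0) = 0)}


/-- quadratic form on directions -/
def qdir {K : Type*} [Field K] (A B C : K) : Option K → K
  | none => C
  | some m => A + B * m + C * m ^ 2

def ldir {K : Type*} [Field K] (D E : K) : Option K → K
  | none => E
  | some m => D + E * m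

open Classical in
lemma qdir_zeros {K : Type*} [Field K] [Fintype K] (A B C : K) (h : ¬ (A = 0 ∧ B = 0 ∧ C = 0)) :
    (Finset.univ.filter fun d : Option K => qdir A B C d = 0).card ≤ 2 := by
  by_contra hc
  push Not at hc
  rw [Finset.two_lt_card] at hc
  obtain ⟨a, ha, b, hb, c, hc, hab, hac, hbc⟩ := hc
  apply h
  simp only [Finset.mem_filter, Finset.mem_univ, true_and] at ha hb hc
  have key2 : ∀ m n : K, m ≠ n → C = 0 → A + B * m + C * m ^ 2 = 0 → A + B * n + C * n ^ 2 = 0 →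
      A = 0 ∧ B = 0 ∧ C = 0 := by
    intro m n hmn hC h1 h2
    have hB : B * (m - n) = 0 := by rw [hC] at h1 h2; linear_combination h1 - h2
    have hB0 : B = 0 := by
      rcases mul_eq_zero.1 hB with h | h
      · exact h
      · exact absurd (sub_eq_zero.1 h) hmn
    refine ⟨?_, hB0, hC⟩
    rw [hB0, hC] at h1; linear_combination h1
  rcases a with _ | a <;> rcases b with _ | b <;> rcases c with _ | c <;>
    simp only [qdir, ne_eq, not_true_eq_false, Option.some.injEq, reduceCtorEq, not_false_eq_true] at ha hb hc hab hac hbc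
  · exact key2 b c hbc ha hb hc
  · exact key2 a c hac hb ha hc
  · exact key2 a b hab hc ha hb
  · have h1 : (a - b) * (B + C * (a + b)) = 0 := by linear_combination ha - hb
    have h2 : (a - c) * (B + C * (a + c)) = 0 := by linear_combination ha - hc
    have h1' := (mul_eq_zero.1 h1).resolve_left (sub_ne_zero.2 hab)
    have h2' := (mul_eq_zero.1 h2).resolve_left (sub_ne_zero.2 hac)
    have h3 : (b - c) * C = 0 := by linear_combination h1' - h2'
    exact key2 a b hab ((mul_eq_zero.1 h3).resolve_left (sub_ne_zero.2 hbc)) ha hb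

open Classical in
lemma ldir_zeros {K : Type*} [Field K] (D E : K) (h : ¬ (D = 0 ∧ E = 0)) :
    ∃ d0 : Option K, ldir D E d0 = 0 ∧ ∀ d, d ≠ d0 → ldir D E d ≠ 0 := by
  by_cases hE : E = 0
  · refine ⟨none, hE, ?_⟩
    rintro (_ | d) hd
    · simp at hd
    · simp only [ldir, hE]
      intro h0
      exact h ⟨by linear_combination h0, hE⟩
  · refine ⟨some (-D / E), by simp only [ldir]; field_simp; ring, ?_⟩
    rintro (_ | d) hd
    · exact hE
    · simp only [ldir]
      intro h0
      apply hd
      congr 1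
      field_simp
      linear_combination h0

/-- vector of a direction -/
def vdir {K : Type*} [Field K] : Option K → K × K
  | none => (0, 1)
  | some m => (1, m)

open Classical in
noncomputable def fdir {K : Type*} [Field K] [Fintype K] (A B C D E : K) (d : Option K) : ℕ :=
  (Finset.univ.filter fun s : K => s ≠ 0 ∧ s * qdir A B C d + ldir D E d = 0).card

open Classical in
lemma conic_sum {K : Type*} [Field K] [Fintype K] (A B C D E : K) :
    (Finset.univ.filter fun p : K × K =>
      A * p.1 ^ 2 + B * p.1 * p.2 + C * p.2 ^ 2 + D * p.1 + E * p.2 = 0).card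
    = 1 + ∑ d : Option K, fdir A B C D E d := by
  set T := Finset.univ.filter fun p : K × K =>
      A * p.1 ^ 2 + B * p.1 * p.2 + C * p.2 ^ 2 + D * p.1 + E * p.2 = 0 with hT
  have h0 : (0 : K × K) ∈ T := by simp [hT]
  rw [← Finset.card_erase_add_one h0, add_comm]
  congr 1
  let dir : K × K → Option K := fun p => if p.1 = 0 then none else some (p.2 / p.1)
  rw [Finset.card_eq_sum_card_fiberwise (f := dir) (t := Finset.univ) (by intro x _; simp)]
  refine Finset.sum_congr rfl fun d _ => ?_
  unfold fdir
  symm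
  refine Finset.card_bij (fun s _ => (s * (vdir d).1, s * (vdir d).2)) ?_ ?_ ?_
  · intro s hs
    simp only [Finset.mem_filter, Finset.mem_univ, true_and] at hs
    obtain ⟨hs0, hs⟩ := hs
    rcases d with _ | m
    · simp only [qdir, ldir] at hs
      simp [vdir, hT, dir, hs0]
      linear_combination s * hs
    · simp only [qdir, ldir] at hs
      simp [vdir, hT, dir, hs0]
      linear_combination s * hs
  · intro s _ s' _ h
    rcases d with _ | m <;> simp [vdir] at h
    · exact h
    · exact h.1
  · rintro ⟨x, y⟩ hp
    simp only [Finset.mem_filter, Finset.mem_univ, true_and, Finset.mem_erase, hT, dir] at hp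
    obtain ⟨⟨h0, he⟩, hd⟩ := hp
    by_cases hx : x = 0
    · subst hx
      simp at hd
      subst hd
      have hy : y ≠ 0 := by rintro rfl; exact h0 rfl
      refine ⟨y, ?_, by simp [vdir]⟩
      refine Finset.mem_filter.2 ⟨Finset.mem_univ _, hy, mul_left_cancel₀ hy ?_⟩
      simp only [qdir, ldir]
      linear_combination he
    · simp [hx] at hd
      subst hd
      refine ⟨x, ?_, by simp [vdir]; field_simp⟩
      refine Finset.mem_filter.2 ⟨Finset.mem_univ _, hx, mul_left_cancel₀ hx ?_⟩
      simp only [qdir, ldir]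
      field_simp
      linear_combination he

open Classical in
lemma fdir_eq {K : Type*} [Field K] [Fintype K] (A B C D E : K) (d : Option K) :
    fdir A B C D E d = if qdir A B C d = 0 then (if ldir D E d = 0 then Fintype.card K - 1 else 0)
      else (if ldir D E d = 0 then 0 else 1) := by
  unfold fdir
  split_ifs with h1 h2 h2
  · simp [h1, h2, Finset.filter_ne', Finset.card_univ]
  · simp [h1, h2]
  · simp [h1, h2]
  · rw [Finset.card_eq_one]
    refine ⟨-ldir D E d / qdir A B C d, ?_⟩
    ext s
    simp only [Finset.mem_filter, Finset.mem_univ, true_and, Finset.mem_singleton]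
    constructor
    · rintro ⟨_, h⟩
      field_simp
      linear_combination h
    · rintro rfl
      refine ⟨by simp [h1, h2], by field_simp; ring⟩

open Classical in
lemma conic0 {K : Type*} [Field K] [Fintype K] (A B C D E : K) (N z : ℕ)
    (hN : N = (Finset.univ.filter fun p : K × K =>
      A * p.1 ^ 2 + B * p.1 * p.2 + C * p.2 ^ 2 + D * p.1 + E * p.2 = 0).card)
    (hz : z = (Finset.univ.filter fun d : Option K => qdir A B C d = 0).card) :
    N = 1 + (Fintype.card K - 1) * z ∨ (1 ≤ z ∧ N + z = 2 * Fintype.card K + 1) ∨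
      N + z = Fintype.card K + 1 := by
  rw [conic_sum] at hN
  have hK : 1 ≤ Fintype.card K := Fintype.card_pos
  by_cases h : D = 0 ∧ E = 0
  · left
    obtain ⟨rfl, rfl⟩ := h
    have : ∀ d : Option K, ldir (0 : K) 0 d = 0 := by rintro (_ | d) <;> simp [ldir]
    rw [hN, hz]
    simp only [fdir_eq, this, if_true]
    simp [Finset.sum_ite, mul_comm]
  · right
    obtain ⟨d0, hd0, hd⟩ := ldir_zeros D E h
    set g : Option K → ℕ := fun d => if qdir A B C d = 0 then 0 else 1 with hg
    have hs : ∑ d, g d + z = Fintype.card K + 1 := by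
      have := Finset.card_filter_add_card_filter_not (s := (Finset.univ : Finset (Option K)))
        (fun d => qdir A B C d = 0)
      rw [← hz] at this
      simp [hg, Finset.sum_ite] at this ⊢
      omega
    have h1 : ∑ d, fdir A B C D E d = fdir A B C D E d0 + ∑ d ∈ Finset.univ.erase d0, g d := by
      rw [← Finset.add_sum_erase _ _ (Finset.mem_univ d0)]
      congr 1
      refine Finset.sum_congr rfl fun d hdd => ?_
      rw [fdir_eq, if_neg (hd d (Finset.ne_of_mem_erase hdd)),
        if_neg (hd d (Finset.ne_of_mem_erase hdd))]
    have h2 : ∑ d, g d = g d0 + ∑ d ∈ Finset.univ.erase d0, g d := by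
      rw [← Finset.add_sum_erase _ _ (Finset.mem_univ d0)]
    rw [fdir_eq] at h1
    by_cases hq : qdir A B C d0 = 0
    · left
      have hz1 : 1 ≤ z := by
        rw [hz]; exact Finset.card_pos.2 ⟨d0, by simp [hq]⟩
      rw [if_pos hq, if_pos hd0] at h1
      have hg0 : g d0 = 0 := by simp [hg, hq]
      omega
    · right
      rw [if_neg hq, if_pos hd0] at h1
      have hg0 : g d0 = 1 := by simp [hg, hq]
      omega

open Classical in
lemma conic1 {K : Type*} [Field K] [Fintype K] (A B C D E G : K) (N z : ℕ)
    (hN : N = (Finset.univ.filter fun p : K × K =>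
      A * p.1 ^ 2 + B * p.1 * p.2 + C * p.2 ^ 2 + D * p.1 + E * p.2 + G = 0).card)
    (hz : z = (Finset.univ.filter fun d : Option K => qdir A B C d = 0).card) :
    N = 0 ∨ N = 1 + (Fintype.card K - 1) * z ∨ (1 ≤ z ∧ N + z = 2 * Fintype.card K + 1) ∨
      N + z = Fintype.card K + 1 := by
  by_cases h0 : N = 0
  · exact Or.inl h0
  right
  have : 0 < N := Nat.pos_of_ne_zero h0
  rw [hN, Finset.card_pos] at this
  obtain ⟨⟨x, y⟩, hp⟩ := this
  simp only [Finset.mem_filter, Finset.mem_univ, true_and] at hp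
  refine conic0 A B C (D + 2 * A * x + B * y) (E + 2 * C * y + B * x) N z ?_ hz
  rw [hN]
  refine Finset.card_bij (fun p _ => (p.1 - x, p.2 - y)) ?_ ?_ ?_
  · rintro ⟨a, b⟩ h
    simp only [Finset.mem_filter, Finset.mem_univ, true_and] at h ⊢
    linear_combination h - hp
  · rintro ⟨a, b⟩ _ ⟨a', b'⟩ _ h
    simpa using h
  · rintro ⟨a, b⟩ h
    simp only [Finset.mem_filter, Finset.mem_univ, true_and] at h
    refine ⟨(a + x, b + y), ?_, by simp⟩
    simp only [Finset.mem_filter, Finset.mem_univ, true_and]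
    linear_combination h + hp

open Classical in
lemma conic_lin {K : Type*} [Field K] [Fintype K] (D E G : K) (N : ℕ)
    (hN : N = (Finset.univ.filter fun p : K × K =>
      (0 : K) * p.1 ^ 2 + 0 * p.1 * p.2 + 0 * p.2 ^ 2 + D * p.1 + E * p.2 + G = 0).card) :
    N = 0 ∨ N = Fintype.card K ∨ N = Fintype.card K ^ 2 := by
  have hz : (Finset.univ.filter fun d : Option K => qdir (0 : K) 0 0 d = 0).card
      = Fintype.card K + 1 := by
    have : ∀ d : Option K, qdir (0 : K) 0 0 d = 0 := by rintro (_ | d) <;> simp [qdir]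
    simp [this]
  have hK : 1 ≤ Fintype.card K := Fintype.card_pos
  have := conic1 0 0 0 D E G N _ hN rfl
  rw [hz] at this
  obtain ⟨k, hk⟩ : ∃ k, Fintype.card K = k + 1 := ⟨_, (Nat.sub_add_cancel hK).symm⟩
  rw [hk] at this ⊢
  rcases this with h | h | h | h
  · exact Or.inl h
  · right; right; rw [h]; simp; ring
  · right; left; omega
  · left; omega

lemma conic1' {K : Type*} [Field K] [Fintype K] (A B C D E G : K) (N z : ℕ)
    (hN : N = Nat.card {p : K × K //
      A * p.1 ^ 2 + B * p.1 * p.2 + C * p.2 ^ 2 + D * p.1 + E * p.2 + G = 0})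
    (hz : z = Nat.card {d : Option K // qdir A B C d = 0}) :
    N = 0 ∨ N = 1 + (Fintype.card K - 1) * z ∨ (1 ≤ z ∧ N + z = 2 * Fintype.card K + 1) ∨
      N + z = Fintype.card K + 1 := by
  classical
  refine conic1 A B C D E G N z ?_ ?_
  · rw [hN, Nat.card_eq_fintype_card, Fintype.card_subtype]
  · rw [hz, Nat.card_eq_fintype_card, Fintype.card_subtype]

lemma conic_lin' {K : Type*} [Field K] [Fintype K] (D E G : K) (N : ℕ)
    (hN : N = Nat.card {p : K × K //
      (0 : K) * p.1 ^ 2 + 0 * p.1 * p.2 + 0 * p.2 ^ 2 + D * p.1 + E * p.2 + G = 0}) :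
    N = 0 ∨ N = Fintype.card K ∨ N = Fintype.card K ^ 2 := by
  classical
  refine conic_lin D E G N ?_
  rw [hN, Nat.card_eq_fintype_card, Fintype.card_subtype]

lemma qdir_zeros' {K : Type*} [Field K] [Fintype K] (A B C : K)
    (h : ¬ (A = 0 ∧ B = 0 ∧ C = 0)) :
    Nat.card {d : Option K // qdir A B C d = 0} ≤ 2 := by
  classical
  rw [Nat.card_eq_fintype_card, Fintype.card_subtype]
  exact qdir_zeros A B C h

open Classical in
lemma aff_count {F : Type*} [Field F] [Fintype F] (φ : F →+* F) (hφ : ∀ x, φ (φ x) = x)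
    (β : F) (hβ : φ β ≠ β) (q : ℕ) (hq : 2 < q) (hF : Fintype.card F = q ^ 2)
    (u0 u1 u2 n0 n1 n2 : F) (hn0 : φ n0 = n0) (hn2 : φ n2 = n2) (N : ℕ)
    (hN : N = (Finset.univ.filter fun t : F => φ (u0 + u1 * t + u2 * t ^ 2)
      - (u0 + u1 * t + u2 * t ^ 2)
      = (φ β - β) * (n0 + n1 * t + φ n1 * φ t + n2 * (t * φ t))).card) :
    (u2 ≠ 0 → N ∈ ({0, 1, q - 1, q, q + 1, 2 * q - 1, 2 * q} : Set ℕ)) ∧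
    (u2 = 0 → N ∈ ({0, 1, q + 1, q, q ^ 2} : Set ℕ)) := by
  let K : Subfield F := φ.eqLocusField (RingHom.id F)
  have hK : ∀ x, x ∈ K ↔ φ x = x := fun x => Iff.rfl
  have he : φ β - β ≠ 0 := sub_ne_zero.2 hβ
  let ρ : F → F := fun w => (φ w - w) / (φ β - β)
  have hρdef : ∀ w, ρ w = (φ w - w) / (φ β - β) := fun w => rfl
  have hρ : ∀ w, φ (ρ w) = ρ w := by
    intro w
    simp only [hρdef, map_div₀, map_sub, hφ]
    rw [← neg_sub (φ w) w, ← neg_sub (φ β) β, neg_div_neg_eq]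
  have hρm : ∀ w, ρ w * (φ β - β) = φ w - w := fun w => div_mul_cancel₀ _ he
  -- parametrization
  let par : K × K → F := fun p => p.1.1 + p.2.1 * β
  have hpar : Function.Bijective par := by
    constructor
    · rintro ⟨⟨a, ha⟩, ⟨b, hb⟩⟩ ⟨⟨c, hc⟩, ⟨d, hd⟩⟩ h
      rw [hK] at ha hb hc hd
      simp only [par] at h
      have h' := congrArg φ h
      simp only [map_add, map_mul, ha, hb, hc, hd] at h'
      have h1 : (b - d) * (φ β - β) = 0 := by linear_combination h' - h
      have h2 : b = d := sub_eq_zero.1 ((mul_eq_zero.1 h1).resolve_right he)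
      subst h2
      have h3 : a = c := by linear_combination h
      subst h3
      rfl
    · intro t
      refine ⟨(⟨t - ρ t * β, ?_⟩, ⟨ρ t, hρ t⟩), ?_⟩
      · rw [hK, map_sub, map_mul, hρ]
        linear_combination -(hρm t)
      · simp [par]
  have hcK : Fintype.card K = q := by
    have h1 := Fintype.card_of_bijective hpar
    rw [Fintype.card_prod, hF, ← sq] at h1
    exact Nat.pow_left_injective two_ne_zero h1
  let cA : K := ⟨ρ u2 - n2, by rw [hK, map_sub, hρ, hn2]⟩
  let cB : K := ⟨ρ (2 * u2 * β) - n2 * (β + φ β), by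
    rw [hK, map_sub, hρ, map_mul, map_add, hφ, hn2, add_comm β]⟩
  let cC : K := ⟨ρ (u2 * β ^ 2) - n2 * (β * φ β), by
    rw [hK, map_sub, hρ, map_mul, map_mul, hφ, hn2, mul_comm β]⟩
  let cD : K := ⟨ρ u1 - (n1 + φ n1), by rw [hK, map_sub, hρ, map_add, hφ, add_comm n1]⟩
  let cE : K := ⟨ρ (u1 * β) - (n1 * β + φ n1 * φ β), by
    rw [hK, map_sub, hρ, map_add, map_mul, map_mul, hφ, hφ, add_comm (n1 * β)]⟩
  let cG : K := ⟨ρ u0 - n0, by rw [hK, map_sub, hρ, hn0]⟩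
  have hN' : N = Nat.card {p : K × K //
      cA * p.1 ^ 2 + cB * p.1 * p.2 + cC * p.2 ^ 2 + cD * p.1 + cE * p.2 + cG = 0} := by
    rw [hN, Nat.card_eq_fintype_card, Fintype.card_subtype]
    symm
    refine Finset.card_bij (fun p _ => par p) ?_ (fun p _ p' _ h => hpar.1 h) ?_
    all_goals
      have key : ∀ p : K × K, (cA * p.1 ^ 2 + cB * p.1 * p.2 + cC * p.2 ^ 2 + cD * p.1 + cE * p.2
          + cG = 0) ↔ φ (u0 + u1 * par p + u2 * par p ^ 2)
            - (u0 + u1 * par p + u2 * par p ^ 2)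
            = (φ β - β) * (n0 + n1 * par p + φ n1 * φ (par p) + n2 * (par p * φ (par p))) := by
        rintro ⟨⟨x, hx⟩, ⟨y, hy⟩⟩
        rw [hK] at hx hy
        rw [← Subtype.coe_inj]
        simp only [par, cA, cB, cC, cD, cE, cG, Subfield.coe_add, Subfield.coe_mul,
          SubmonoidClass.coe_pow, Subfield.coe_zero, map_add, map_mul, map_pow, hx, hy]
        rw [← mul_right_inj' he, ← sub_eq_zero (b := (φ β - β) * (_ + _))]
        have e1 := hρm u2
        have e2 := hρm (2 * u2 * β)
        have e3 := hρm (u2 * β ^ 2)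
        have e4 := hρm u1
        have e5 := hρm (u1 * β)
        have e6 := hρm u0
        simp only [map_add, map_mul, map_pow, map_ofNat] at e2 e3 e5
        rw [mul_zero]
        refine Eq.congr_left ?_
        linear_combination x ^ 2 * e1 + x * y * e2 + y ^ 2 * e3 + x * e4 + y * e5 + e6
    · intro p hp
      simp only [Finset.mem_filter, Finset.mem_univ, true_and] at hp ⊢
      exact (key p).1 hp
    · intro t ht
      obtain ⟨p, rfl⟩ := hpar.2 t
      simp only [Finset.mem_filter, Finset.mem_univ, true_and] at ht
      exact ⟨p, by simpa using (key p).2 ht, rfl⟩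
  have hmain := conic1' cA cB cC cD cE cG N _ hN' rfl
  rw [hcK] at hmain
  by_cases hABC : cA = 0 ∧ cB = 0 ∧ cC = 0
  · obtain ⟨hA, hB, hC⟩ := hABC
    have hu2 : u2 = 0 := by
      have hA' := congrArg Subtype.val hA
      have hB' := congrArg Subtype.val hB
      have hC' := congrArg Subtype.val hC
      simp only [cA, cB, cC, Subfield.coe_zero] at hA' hB' hC'
      have e1 := hρm u2
      have e2 := hρm (2 * u2 * β)
      have e3 := hρm (u2 * β ^ 2)
      simp only [map_mul, map_pow, map_ofNat] at e2 e3
      rw [sub_eq_zero.1 hA'] at e1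
      rw [sub_eq_zero.1 hB'] at e2
      rw [sub_eq_zero.1 hC'] at e3
      have : u2 * (φ β - β) ^ 2 = 0 := by
        linear_combination ((φ β) ^ 2) * e1 - φ β * e2 + e3
      exact (mul_eq_zero.1 this).resolve_right (pow_ne_zero 2 he)
    rw [hA, hB, hC] at hN'
    have := conic_lin' cD cE cG N hN'
    rw [hcK] at this
    refine ⟨fun h => absurd hu2 h, fun _ => ?_⟩
    rcases this with h | h | h <;> simp [h]
  · constructor
    · intro _
      have hz := qdir_zeros' cA cB cC hABC
      revert hmain hz
      generalize Nat.card {d : Option K // qdir cA cB cC d = 0} = z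
      intro hmain hz
      simp only [Set.mem_insert_iff, Set.mem_singleton_iff]
      interval_cases z <;> omega
    · intro hu2
      have hn : n2 ≠ 0 := by
        rintro rfl
        apply hABC
        refine ⟨?_, ?_, ?_⟩ <;> apply Subtype.ext <;> simp [cA, cB, cC, hu2, ρ]
      have hz : Nat.card {d : Option K // qdir cA cB cC d = 0} = 0 := by
        rw [Nat.card_eq_zero]; left; constructor
        have hβ0 : β ≠ 0 := by rintro rfl; simp at hβ
        have hφβ0 : φ β ≠ 0 := by simpa using hβ0
        rintro ⟨_ | ⟨m, hm⟩, h⟩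
        · have := congrArg Subtype.val h
          simp [qdir, cC, hu2, ρ, hn, hβ0] at this
        · have := congrArg Subtype.val h
          rw [hK] at hm
          simp [qdir, cA, cB, cC, hu2, ρ] at this
          have h3 : n2 * ((1 + m * β) * φ (1 + m * β)) = 0 := by
            simp only [map_add, map_mul, map_one, hm]
            linear_combination -this
          have h4 : 1 + m * β = 0 := by
            rcases mul_eq_zero.1 ((mul_eq_zero.1 h3).resolve_left hn) with h | h
            · exact h
            · exact (map_eq_zero φ).1 h
          have h5 := congrArg φ h4
          simp only [map_add, map_mul, map_one, hm, map_zero] at h5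
          have h6 : m * (φ β - β) = 0 := by linear_combination h5 - h4
          have h7 := (mul_eq_zero.1 h6).resolve_right he
          rw [h7] at h4
          simp at h4
      rw [hz] at hmain
      simp only [Set.mem_insert_iff, Set.mem_singleton_iff]
      omega

def inB {F : Type*} [Field F] (q r : ℕ) (α β : F) (x : Fin (r + 1) → F) : Prop :=
  (x 0 ≠ 0 ∧ affEq q r α β fun i => x i / x 0) ∨
       (x 0 = 0 ∧ (∑ i : Fin (r + 1), if 1 ≤ i.1 ∧ i.1 < r then x i ^ 2 else 0) = 0)

lemma inB_smul {F : Type*} [Field F] (q r : ℕ) (α β : F) (x : Fin (r + 1) → F) (c : F)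
    (hc : c ≠ 0) : inB q r α β (c • x) ↔ inB q r α β x := by
  unfold inB
  simp only [Pi.smul_apply, smul_eq_mul, mul_pow, mul_div_mul_left _ _ hc, ne_eq, mul_eq_zero, hc,
    false_or, ← mul_ite_zero, ← Finset.mul_sum, pow_eq_zero_iff, two_ne_zero, not_false_eq_true]

def vec {F : Type*} [Field F] {n : ℕ} (v w : Fin n → F) : Option F → (Fin n → F)
  | none => w
  | some t => v + t • w

open Classical in
lemma card_line {F : Type*} [Field F] [Fintype F] (q r : ℕ) (α β : F)
    (L : Submodule F (Fin (r + 1) → F)) (v w : Fin (r + 1) → F)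
    (hli : ∀ c d : F, c • v + d • w = 0 → c = 0 ∧ d = 0)
    (hsp : ∀ x, x ∈ L ↔ ∃ c d : F, c • v + d • w = x) :
    Nat.card ↥(Bset F q r α β ∩ {P | P.rep ∈ L}) =
      (Finset.univ.filter fun d : Option F => inB q r α β (vec v w d)).card := by
  have hv0 : ∀ d, vec v w d ≠ 0 := by
    rintro (_ | t) h
    · have := hli 0 1 (by simpa [vec] using h)
      simp at this
    · have := hli 1 t (by simpa [vec] using h)
      simp at this
  have hmem : ∀ d, vec v w d ∈ L := by
    rintro (_ | t)
    · exact (hsp _).2 ⟨0, 1, by simp [vec]⟩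
    · exact (hsp _).2 ⟨1, t, by simp [vec]⟩
  have hrep : ∀ (x : Fin (r + 1) → F) (hx : x ≠ 0), ∃ a : F, a ≠ 0 ∧
      (Projectivization.mk F x hx).rep = a • x := by
    intro x hx
    obtain ⟨a, ha⟩ := Projectivization.exists_smul_eq_mk_rep F x hx
    exact ⟨a, a.ne_zero, by rw [← ha]; rfl⟩
  rw [← Fintype.card_subtype, ← Nat.card_eq_fintype_card]
  symm
  refine Nat.card_congr (Equiv.ofBijective
    (fun d : {d : Option F // inB q r α β (vec v w d)} =>
      (⟨Projectivization.mk F (vec v w d.1) (hv0 d.1), ?_, ?_⟩ :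
        ↥(Bset F q r α β ∩ {P | P.rep ∈ L}))) ⟨?_, ?_⟩)
  · obtain ⟨a, ha, h⟩ := hrep _ (hv0 d.1)
    change inB q r α β _
    rw [h, inB_smul _ _ _ _ _ _ ha]
    exact d.2
  · obtain ⟨a, ha, h⟩ := hrep _ (hv0 d.1)
    change Projectivization.rep _ ∈ L
    rw [h]
    exact L.smul_mem _ (hmem _)
  · rintro ⟨d, hd⟩ ⟨d', hd'⟩ h
    simp only [Subtype.mk.injEq]
    have h' := congrArg Subtype.val h
    obtain ⟨a, ha⟩ := (Projectivization.mk_eq_mk_iff' _ _ _ _ _).1 h'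
    clear h h'
    rcases d with _ | t <;> rcases d' with _ | t' <;> simp only [vec] at ha
    · rfl
    · have := hli a (a * t' - 1) (by
        rw [sub_smul, one_smul, mul_smul]; nth_rewrite 2 [← ha]; rw [smul_add]; abel)
      obtain ⟨h1, h2⟩ := this
      rw [h1] at h2; simp at h2
    · have := hli 1 (t - a) (by rw [sub_smul, ha, one_smul]; abel)
      simp at this
    · have := hli (a - 1) (a * t' - t) (by
        have h0 : a • (v + t' • w) - (v + t • w) = 0 := sub_eq_zero.2 ha
        rw [← h0, sub_smul, sub_smul, one_smul, mul_smul, smul_add]; abel)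
      obtain ⟨h1, h2⟩ := this
      have h1 : a = 1 := sub_eq_zero.1 h1
      subst h1
      congr 1
      linear_combination -h2
  · rintro ⟨P, hP, hPL⟩
    have hPB : inB q r α β P.rep := hP
    obtain ⟨c, d, hcd⟩ := (hsp _).1 hPL
    have hex : ∃ o : Option F, ∃ a : F, a ≠ 0 ∧ a • vec v w o = P.rep := by
      by_cases hc : c = 0
      · subst hc
        refine ⟨none, d, ?_, by simpa [vec] using hcd⟩
        rintro rfl
        exact P.rep_nonzero (by simp [← hcd])
      · refine ⟨some (d / c), c, hc, ?_⟩
        rw [← hcd]; simp only [vec]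
        rw [smul_add, smul_smul, mul_div_cancel₀ _ hc]
    obtain ⟨o, a, ha, h⟩ := hex
    refine ⟨⟨o, ?_⟩, ?_⟩
    · rw [← inB_smul _ _ _ _ _ a ha, h]; exact hPB
    · apply Subtype.ext
      change Projectivization.mk F _ _ = P
      conv_rhs => rw [← P.mk_rep]
      rw [Projectivization.mk_eq_mk_iff']
      exact ⟨a⁻¹, (inv_smul_eq_iff₀ ha).2 h.symm⟩

lemma exists_basis {F : Type*} [Field F] {r : ℕ}
    (L : Submodule F (Fin (r + 1) → F)) (hL : Module.finrank F L = 2) :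
    ∃ v w : Fin (r + 1) → F, (∀ c d : F, c • v + d • w = 0 → c = 0 ∧ d = 0) ∧
      (∀ x, x ∈ L ↔ ∃ c d : F, c • v + d • w = x) ∧ w 0 = 0 ∧ (v 0 = 0 ∨ v 0 = 1) := by
  have h1 : ∃ v w : Fin (r + 1) → F, (∀ c d : F, c • v + d • w = 0 → c = 0 ∧ d = 0) ∧
      (∀ x, x ∈ L ↔ ∃ c d : F, c • v + d • w = x) := by
    let b := Module.finBasisOfFinrankEq F L hL
    refine ⟨(b 0 : L), (b 1 : L), ?_, ?_⟩
    · intro c d h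
      have hb := Fintype.linearIndependent_iff.1 b.linearIndependent ![c, d] (by
        apply Subtype.ext
        simpa [Fin.sum_univ_two] using h)
      exact ⟨hb 0, hb 1⟩
    · intro x
      constructor
      · intro hx
        have := b.sum_repr ⟨x, hx⟩
        rw [Fin.sum_univ_two] at this
        exact ⟨_, _, congrArg Subtype.val this⟩
      · rintro ⟨c, d, rfl⟩
        exact L.add_mem (L.smul_mem _ (b 0).2) (L.smul_mem _ (b 1).2)
  obtain ⟨v, w, hli, hsp⟩ := h1
  have h2 : ∃ v w : Fin (r + 1) → F, (∀ c d : F, c • v + d • w = 0 → c = 0 ∧ d = 0) ∧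
      (∀ x, x ∈ L ↔ ∃ c d : F, c • v + d • w = x) ∧ (v 0 = 0 → w 0 = 0) := by
    by_cases hv : v 0 = 0
    · refine ⟨w, v, fun c d h => (hli d c (by rw [← h, add_comm (c • _)])).symm, fun x => ?_, fun _ => hv⟩
      rw [hsp]
      exact ⟨fun ⟨c, d, h⟩ => ⟨d, c, by rw [← h, add_comm (c • _)]⟩, fun ⟨c, d, h⟩ => ⟨d, c, by rw [← h, add_comm (c • _)]⟩⟩
    · exact ⟨v, w, hli, hsp, fun h => absurd h hv⟩
  clear hli hsp
  obtain ⟨v, w, hli, hsp, h0⟩ := h2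
  by_cases hv : v 0 = 0
  · exact ⟨v, w, hli, hsp, h0 hv, Or.inl hv⟩
  · refine ⟨(v 0)⁻¹ • v, w - (w 0 / v 0) • v, ?_, ?_, ?_, Or.inr ?_⟩
    · intro c d h
      have := hli (c * (v 0)⁻¹ - d * (w 0 / v 0)) d (by
        rw [← h]; module)
      obtain ⟨h1, h2⟩ := this
      rw [h2] at h1
      simp [hv] at h1
      exact ⟨h1, h2⟩
    · intro x
      rw [hsp]
      constructor
      · rintro ⟨c, d, rfl⟩
        refine ⟨c * v 0 + d * w 0, d, ?_⟩
        ext i; simp; field_simp; ring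
      · rintro ⟨c, d, rfl⟩
        refine ⟨c * (v 0)⁻¹ - d * (w 0 / v 0), d, ?_⟩
        module
    · simp [hv]
    · simp [hv]

theorem statement6 (q r : ℕ) (hq : IsPrimePow q) (hq2 : 2 < q) (hr : 3 ≤ r)
    (F : Type) [Field F] [Fintype F] (hF : Fintype.card F = q ^ 2)
    (α β : F) (hα : α ≠ 0) (hβ : β ^ q ≠ β)
    (hcond :
      (Odd q ∧ ((Odd r ∧ 4 * α ^ (q + 1) + (β ^ q - β) ^ 2 ≠ 0) ∨
        (Even r ∧ ∀ t : F, t ^ q = t → t ^ 2 ≠ 4 * α ^ (q + 1) + (β ^ q - β) ^ 2))) ∨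
      (Even q ∧ (Odd r ∨ (Even r ∧ ∀ m : ℕ, q = 2 ^ m →
        ∑ i ∈ Finset.range m, (α ^ (q + 1) / (β ^ q + β) ^ 2) ^ 2 ^ i = 0))))
    (L : Submodule F (Fin (r + 1) → F)) (hL : Module.finrank F L = 2) :
    Nat.card ↥(Bset F q r α β ∩ {P | P.rep ∈ L}) ∈
      ({0, 1, 2, q - 1, q, q + 1, q + 2, 2 * q - 1, 2 * q, q ^ 2 + 1} : Set ℕ) := by
  classical
  clear hcond
  obtain ⟨v, w, hli, hsp, hw, hv⟩ := exists_basis L hL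
  rw [card_line q r α β L v w hli hsp]
  set S : Finset (Fin (r + 1)) := Finset.univ.filter fun i => 1 ≤ i.1 ∧ i.1 < r with hS
  have hsum : ∀ f : Fin (r + 1) → F,
      (∑ i : Fin (r + 1), if 1 ≤ i.1 ∧ i.1 < r then f i else 0) = ∑ i ∈ S, f i := by
    intro f; rw [hS, Finset.sum_filter]
  rcases hv with hv | hv
  · -- line at infinity
    have hB : ∀ d, inB q r α β (vec v w d) ↔
        qdir (∑ i ∈ S, v i ^ 2) (2 * ∑ i ∈ S, v i * w i) (∑ i ∈ S, w i ^ 2) d = 0 := by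
      rintro (_ | t)
      · simp [inB, vec, qdir, hw, hsum]
      · simp only [inB, vec, qdir, hw, hv, hsum, Pi.add_apply, Pi.smul_apply, smul_eq_mul,
          mul_zero, add_zero, ne_eq, not_true_eq_false, false_and, true_and, false_or]
        refine Eq.congr_left ?_
        simp only [Finset.mul_sum, Finset.sum_mul, ← Finset.sum_add_distrib]
        exact Finset.sum_congr rfl fun i _ => by ring
    simp only [hB]
    by_cases h : (∑ i ∈ S, v i ^ 2) = 0 ∧ (2 * ∑ i ∈ S, v i * w i) = 0 ∧ (∑ i ∈ S, w i ^ 2) = 0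
    · obtain ⟨h1, h2, h3⟩ := h
      rw [h1, h2, h3]
      have : ∀ d : Option F, qdir (0 : F) 0 0 d = 0 := by rintro (_ | d) <;> simp [qdir]
      simp [this, hF]
    · have := qdir_zeros _ _ _ h
      simp only [Set.mem_insert_iff, Set.mem_singleton_iff]
      omega
  · -- affine line
    obtain ⟨p, k, hp, hk, rfl⟩ := hq
    have hp' : p.Prime := hp.nat_prime
    have : Fact p.Prime := ⟨hp'⟩
    have : CharP F p := charP_of_card_eq_prime_pow (f := k * 2) (by rw [hF, pow_mul])
    let φ : F →+* F := iterateFrobenius F p k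
    have hφ : ∀ x, φ x = x ^ (p ^ k) := fun x => iterateFrobenius_def p k x
    have hφφ : ∀ x, φ (φ x) = x := by
      intro x
      rw [hφ, hφ, ← pow_mul, ← sq, ← hF, FiniteField.pow_card]
    have hcount := aff_count φ hφφ β (by rwa [hφ]) (p ^ k) hq2 hF
      (v (Fin.last r) + α * ∑ i ∈ S, v i ^ 2) (w (Fin.last r) + α * (2 * ∑ i ∈ S, v i * w i))
      (α * ∑ i ∈ S, w i ^ 2) (∑ i ∈ S, v i * φ (v i)) (∑ i ∈ S, w i * φ (v i))
      (∑ i ∈ S, w i * φ (w i))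
      (by rw [map_sum]; exact Finset.sum_congr rfl fun i _ => by rw [map_mul, hφφ, mul_comm])
      (by rw [map_sum]; exact Finset.sum_congr rfl fun i _ => by rw [map_mul, hφφ, mul_comm])
      _ rfl
    set u0 := v (Fin.last r) + α * ∑ i ∈ S, v i ^ 2 with hu0
    set u1 := w (Fin.last r) + α * (2 * ∑ i ∈ S, v i * w i) with hu1
    set u2 := α * ∑ i ∈ S, w i ^ 2 with hu2
    set n0 := ∑ i ∈ S, v i * φ (v i) with hn0
    set n1 := ∑ i ∈ S, w i * φ (v i) with hn1
    set n2 := ∑ i ∈ S, w i * φ (w i) with hn2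
    have hB : ∀ t : F, inB (p ^ k) r α β (vec v w (some t)) ↔
        φ (u0 + u1 * t + u2 * t ^ 2) - (u0 + u1 * t + u2 * t ^ 2)
          = (φ β - β) * (n0 + n1 * t + φ n1 * φ t + n2 * (t * φ t)) := by
      intro t
      have e1 : ∑ i ∈ S, (v i + t * w i) ^ 2 = ∑ i ∈ S, v i ^ 2 + (2 * ∑ i ∈ S, v i * w i) * t
          + (∑ i ∈ S, w i ^ 2) * t ^ 2 := by
        simp only [Finset.mul_sum, Finset.sum_mul, ← Finset.sum_add_distrib]
        exact Finset.sum_congr rfl fun i _ => by ring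
      have e2 : ∑ i ∈ S, (v i + t * w i) ^ (2 * p ^ k) = φ (∑ i ∈ S, (v i + t * w i) ^ 2) := by
        rw [map_sum]
        exact Finset.sum_congr rfl fun i _ => by rw [hφ, ← pow_mul]
      have e3 : ∑ i ∈ S, (v i + t * w i) ^ (p ^ k + 1)
          = n0 + n1 * t + φ n1 * φ t + n2 * (t * φ t) := by
        rw [hn0, hn1, hn2, map_sum]
        simp only [Finset.sum_mul, ← Finset.sum_add_distrib]
        refine Finset.sum_congr rfl fun i _ => ?_
        rw [pow_succ, ← hφ, map_add, map_mul, map_mul, hφφ]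
        ring
      simp only [inB, vec, affEq, hsum, Pi.add_apply, Pi.smul_apply, smul_eq_mul, hw, hv, mul_zero,
        add_zero, div_one, ne_eq, one_ne_zero, not_false_eq_true, true_and, false_and, or_false]
      rw [e2, e3, e1, ← hφ, ← hφ α, ← hφ β]
      refine Eq.congr_left ?_
      rw [hu0, hu1, hu2]
      simp only [map_add, map_mul, map_pow]
      ring
    have hBw : inB (p ^ k) r α β w ↔ u2 = 0 := by
      simp [inB, hw, hsum, hu2, hα]
    have hcard : (Finset.univ.filter fun d : Option F => inB (p ^ k) r α β (vec v w d)).card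
        = (if u2 = 0 then 1 else 0) + (Finset.univ.filter fun t : F =>
          φ (u0 + u1 * t + u2 * t ^ 2) - (u0 + u1 * t + u2 * t ^ 2)
          = (φ β - β) * (n0 + n1 * t + φ n1 * φ t + n2 * (t * φ t))).card := by
      rw [Finset.card_filter, Fintype.sum_option, Finset.card_filter]
      congr 1
      · simp only [vec, hBw]
      · exact Finset.sum_congr rfl fun t _ => by simp only [hB]
    rw [hcard]
    simp only [Set.mem_insert_iff, Set.mem_singleton_iff] at hcount ⊢
    by_cases h0 : u2 = 0
    · have h := hcount.2 h0
      rw [if_pos h0]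
      omega
    · have h := hcount.1 h0
      rw [if_neg h0]
      omega
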